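/- arXiv:1312.4147 — 2 statements merged into one kernel-verified Lean document; each statement's English description precedes it below -/
import Mathlib

section
/- Let W ⊂ P^2 be a line count configuration of type (1, 2, 3, …, t) over an algebraically closed field k of characteristic 0. Then for every integer r ≥ 1, α((2r−1)W) ≥ r·α(W) + (r−1). -/
open scoped LinearAlgebra.Projectivization

/-- The homogeneous ideal of a point `P` of `ℙ²`: all polynomials vanishing on the
line through the origin corresponding to `P`. -/
noncomputable def pointIdeal (k : Type*) [Field k] (P : ℙ k (Fin 3 → k)) :
    Ideal (MvPolynomial (Fin 3) k) where
  carrier := {f | ∀ c : k, MvPolynomial.eval (c • P.rep) f = 0}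
  zero_mem' := by intro c; simp
  add_mem' := by
    intro a b ha hb c
    simp [ha c, hb c]
  smul_mem' := by
    intro r f hf c
    simp [smul_eq_mul, hf c]

/-- The defining ideal `I_{mW} = ⋂_{P ∈ W} I_P^m` of the fat point scheme `mW`. -/
noncomputable def fatIdeal (k : Type*) [Field k] (W : Finset (ℙ k (Fin 3 → k))) (m : ℕ) :
    Ideal (MvPolynomial (Fin 3) k) :=
  ⨅ P ∈ W, (pointIdeal k P) ^ m

/-- `α(I)`: the least degree `d` such that `I` contains a nonzero homogeneous
polynomial of degree `d`. -/
noncomputable def alphaDeg (k : Type*) [Field k] (I : Ideal (MvPolynomial (Fin 3) k)) : ℕ :=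
  sInf {d : ℕ | ∃ f ∈ I, f ≠ 0 ∧ MvPolynomial.IsHomogeneous f d}

/-!
The product of the `t` lines vanishes on `W`, so `α(W) ≤ t`. Conversely, let a curve have
multiplicity at least `2r - 1` at every point of `W`. By Bézout, the line `L_i` is a component as
soon as `i` times the remaining multiplicity along `T_i` exceeds the degree; removing it lowers the
degree by one and the multiplicities along `T_i`, and only those, by one. When no line can be
removed any more, say in degree `e`, the multiplicity left along `T_i` is at most `⌊e / i⌋`, so the
original degree is at least `e + ∑ i, (2r - 1 - ⌊e / i⌋)`, with negative terms replaced by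
zero. By induction on `t` this is at least `r t + (r - 1)`.
-/

section LineRestriction

open MvPolynomial

variable {σ R A B : Type*}

/-- The restriction `f (v + X • w)` of `f` to the parametrised affine line through `v` with
direction `w`. The coordinates of `v` and `w` lie in an `R`-algebra `A`, so that the line can be
generic. -/
noncomputable def lineRestriction [CommSemiring R] [CommSemiring A] [Algebra R A] (v w : σ → A) :
    MvPolynomial σ R →ₐ[R] Polynomial A :=
  aeval fun i => Polynomial.C (v i) + Polynomial.X * Polynomial.C (w i)

/-- The polynomial `f` vanishes to order at least `m` at the point `v` of affine space. The order is
read off on the generic line through `v`, whose direction is the tuple of the variables: the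
expansion `f (v + X • x)` is divisible by `X ^ m`. -/
def VanishesToOrder [CommSemiring R] (v : σ → R) (m : ℕ) (f : MvPolynomial σ R) : Prop :=
  Polynomial.X ^ m ∣ lineRestriction (fun i => (C (v i) : MvPolynomial σ R)) X f

section CommSemiring

variable [CommSemiring R] [CommSemiring A] [CommSemiring B] [Algebra R A] [Algebra R B]

theorem eval_lineRestriction (v w : σ → A) (z : A) (f : MvPolynomial σ R) :
    (lineRestriction v w f).eval z = aeval (v + z • w) f := by
  have h := comp_aeval_apply (fun i => Polynomial.C (v i) + Polynomial.X * Polynomial.C (w i))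
    ((Polynomial.aeval (R := A) z).restrictScalars R) f
  simpa [lineRestriction, Pi.add_def, mul_comm (w _), ← Polynomial.coe_aeval_eq_eval] using h

theorem map_lineRestriction (g : A →ₐ[R] B) (v w : σ → A) (f : MvPolynomial σ R) :
    (lineRestriction v w f).map (g : A →+* B) = lineRestriction (g ∘ v) (g ∘ w) f := by
  have h := comp_aeval_apply (fun i => Polynomial.C (v i) + Polynomial.X * Polynomial.C (w i))
    (Polynomial.mapAlgHom g) f
  simpa [lineRestriction] using h

theorem natDegree_lineRestriction_le (v w : σ → R) (f : MvPolynomial σ R) :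
    (lineRestriction v w f).natDegree ≤ f.totalDegree := by
  refine (aeval_natDegree_le f le_rfl _ (n := 1) fun i => ?_).trans_eq (mul_one _)
  compute_degree

theorem exists_linearMap_aeval_eq {φ : MvPolynomial σ R} (hφ : φ.IsHomogeneous 1) (A : Type*)
    [CommSemiring A] [Algebra R A] : ∃ ψ : (σ → A) →ₗ[A] A, ∀ v, aeval v φ = ψ v := by
  rw [← mem_homogeneousSubmodule, homogeneousSubmodule_one_eq_span_X] at hφ
  induction hφ using Submodule.span_induction with
  | mem p hp =>
    obtain ⟨i, rfl⟩ := hp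
    exact ⟨LinearMap.proj i, fun v => aeval_X v i⟩
  | zero => exact ⟨0, fun v => map_zero _⟩
  | add p q _ _ hp hq =>
    obtain ⟨ψ, hψ⟩ := hp
    obtain ⟨χ, hχ⟩ := hq
    exact ⟨ψ + χ, fun v => by simp [hψ, hχ]⟩
  | smul a p _ hp =>
    obtain ⟨ψ, hψ⟩ := hp
    exact ⟨algebraMap R A a • ψ, fun v => by simp [hψ, Algebra.smul_def]⟩

theorem eval_smul_of_isHomogeneous_one {φ : MvPolynomial σ R} (hφ : φ.IsHomogeneous 1) (c : R)
    (v : σ → R) : eval (c • v) φ = c * eval v φ := by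
  obtain ⟨ψ, hψ⟩ := exists_linearMap_aeval_eq hφ R
  simp only [aeval_eq_eval] at hψ
  rw [hψ, hψ, map_smul, smul_eq_mul]

theorem lineRestriction_of_isHomogeneous_one {φ : MvPolynomial σ R} (hφ : φ.IsHomogeneous 1)
    (v w : σ → A) : lineRestriction v w φ =
      Polynomial.C (aeval v φ) + Polynomial.X * Polynomial.C (aeval w φ) := by
  obtain ⟨ψ, hψ⟩ := exists_linearMap_aeval_eq hφ (Polynomial A)
  have hC (u : σ → A) : Polynomial.C (aeval u φ) = ψ fun i => Polynomial.C (u i) := by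
    rw [← hψ]
    exact (aeval_algebraMap_apply (Polynomial A) u φ).symm
  rw [hC, hC, ← smul_eq_mul, ← map_smul, ← map_add, ← hψ]
  rfl

theorem VanishesToOrder.X_pow_dvd {v : σ → R} {m : ℕ} {f : MvPolynomial σ R}
    (h : VanishesToOrder v m f) (w : σ → R) : Polynomial.X ^ m ∣ lineRestriction v w f := by
  have hmap := Polynomial.map_dvd ((aeval w : MvPolynomial σ R →ₐ[R] R) : MvPolynomial σ R →+* R) h
  rw [map_lineRestriction, Polynomial.map_pow, Polynomial.map_X] at hmap
  simpa [Function.comp_def] using hmap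

theorem X_dvd_lineRestriction_iff {v w : σ → A} {f : MvPolynomial σ R} :
    Polynomial.X ∣ lineRestriction v w f ↔ aeval v f = 0 := by
  rw [Polynomial.X_dvd_iff, Polynomial.coeff_zero_eq_eval_zero, eval_lineRestriction, zero_smul,
    add_zero]

theorem aeval_C_comp (v : σ → R) (f : MvPolynomial σ R) :
    aeval (fun i => (C (v i) : MvPolynomial σ R)) f = C (eval v f) :=
  aeval_algebraMap_apply (MvPolynomial σ R) v f

theorem X_dvd_lineRestriction_C_iff {v : σ → R} {w : σ → MvPolynomial σ R} {f : MvPolynomial σ R} :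
    Polynomial.X ∣ lineRestriction (fun i => (C (v i) : MvPolynomial σ R)) w f ↔ eval v f = 0 := by
  rw [X_dvd_lineRestriction_iff, aeval_C_comp, C_eq_zero]

theorem VanishesToOrder.eval_eq_zero {v : σ → R} {m : ℕ} {f : MvPolynomial σ R}
    (h : VanishesToOrder v m f) (hm : m ≠ 0) : eval v f = 0 :=
  X_dvd_lineRestriction_C_iff.1 ((dvd_pow_self _ hm).trans h)

end CommSemiring

section CommRing

variable [CommRing R] {v : σ → R} {m : ℕ} {f g φ : MvPolynomial σ R}

theorem vanishesToOrder_of_mem_pow {I : Ideal (MvPolynomial σ R)} (hI : ∀ g ∈ I, eval v g = 0)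
    (hf : f ∈ I ^ m) : VanishesToOrder v m f := by
  rw [VanishesToOrder, ← Ideal.mem_span_singleton, ← Ideal.span_singleton_pow]
  refine Ideal.le_comap_pow _ m (Ideal.pow_right_mono (fun g hg => ?_) m hf)
  rw [Ideal.mem_comap, Ideal.mem_span_singleton]
  exact X_dvd_lineRestriction_C_iff.2 (hI g hg)

theorem VanishesToOrder.of_mul_of_eval_ne_zero [IsDomain R] (h : VanishesToOrder v m (f * g))
    (hf : eval v f ≠ 0) : VanishesToOrder v m g := by
  rw [VanishesToOrder, map_mul] at h
  exact Polynomial.prime_X.pow_dvd_of_dvd_mul_left m (mt X_dvd_lineRestriction_C_iff.1 hf) h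

theorem VanishesToOrder.pred_of_linear_mul [IsDomain R] (h : VanishesToOrder v m (φ * g))
    (hφ : φ.IsHomogeneous 1) (hφ0 : φ ≠ 0) (hv : eval v φ = 0) :
    VanishesToOrder v (m - 1) g := by
  rcases m with _ | m
  · simp [VanishesToOrder]
  have hφv : lineRestriction (fun i => (C (v i) : MvPolynomial σ R)) X φ =
      Polynomial.X * Polynomial.C φ := by
    rw [lineRestriction_of_isHomogeneous_one hφ, aeval_C_comp, hv, aeval_X_left_apply]
    simp
  rw [VanishesToOrder, map_mul, hφv, mul_assoc, pow_succ',
    mul_dvd_mul_iff_left Polynomial.X_ne_zero] at h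
  refine Polynomial.prime_X.pow_dvd_of_dvd_mul_left m ?_ h
  rwa [Polynomial.X_dvd_iff, Polynomial.coeff_C_zero]

theorem lineRestriction_comp_X_sub_C (v w : σ → R) (z : R) (f : MvPolynomial σ R) :
    (lineRestriction (v + z • w) w f).comp (Polynomial.X - Polynomial.C z) =
      lineRestriction v w f := by
  have h : (Polynomial.aeval (Polynomial.X - Polynomial.C z)).comp
      (lineRestriction (v + z • w) w) = lineRestriction v w := by
    refine algHom_ext fun i => ?_
    simp only [lineRestriction, Pi.add_apply, Pi.smul_apply, smul_eq_mul, map_add, map_mul,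
      Polynomial.X_mul_C, AlgHom.coe_comp, Function.comp_apply, aeval_X, Polynomial.aeval_C,
      Polynomial.algebraMap_eq, Polynomial.aeval_X]
    ring
  exact DFunLike.congr_fun h f

theorem VanishesToOrder.X_sub_C_pow_dvd {w : σ → R} {z : R}
    (h : VanishesToOrder (v + z • w) m f) :
    (Polynomial.X - Polynomial.C z) ^ m ∣ lineRestriction v w f := by
  rw [← lineRestriction_comp_X_sub_C v w z f]
  simpa using map_dvd (Polynomial.compRingHom (Polynomial.X - Polynomial.C z)) (h.X_pow_dvd w)

theorem dvd_aeval_sub_self {u : σ → MvPolynomial σ R} (h : ∀ i, φ ∣ u i - X i) :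
    φ ∣ aeval u f - f := by
  have hmk : (Ideal.Quotient.mkₐ R (Ideal.span {φ})).comp (aeval u) =
      Ideal.Quotient.mkₐ R (Ideal.span {φ}) := by
    ext i
    simpa [Ideal.Quotient.mk_eq_mk_iff_sub_mem, Ideal.mem_span_singleton] using h i
  rw [← Ideal.mem_span_singleton, ← Ideal.Quotient.mk_eq_mk_iff_sub_mem]
  exact DFunLike.congr_fun hmk f

end CommRing

end LineRestriction

section Field

open MvPolynomial Module

variable {k σ V ι : Type*} [Field k] {f φ : MvPolynomial σ k} {m : ℕ}

theorem lineRestriction_eq_zero_of_vanishesToOrder {v w : σ → k} {s : Finset ι} {z : ι → k}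
    (hz : Set.InjOn z s) (hf : ∀ i ∈ s, VanishesToOrder (v + z i • w) m f)
    (hd : f.totalDegree < s.card * m) : lineRestriction v w f = 0 := by
  have hdvd : ∏ i ∈ s, (Polynomial.X - Polynomial.C (z i)) ^ m ∣ lineRestriction v w f :=
    Finset.prod_dvd_of_coprime
      (fun i hi j hj hij => (Polynomial.isCoprime_X_sub_C_of_isUnit_sub
        (sub_ne_zero.2 (hz.ne hi hj hij)).isUnit).pow)
      fun i hi => (hf i hi).X_sub_C_pow_dvd
  have hdeg : (∏ i ∈ s, (Polynomial.X - Polynomial.C (z i)) ^ m).natDegree = s.card * m := by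
    rw [Polynomial.natDegree_prod_of_monic _ _ fun i _ => (Polynomial.monic_X_sub_C (z i)).pow m]
    simp
  refine Polynomial.eq_zero_of_dvd_of_natDegree_lt hdvd ?_
  exact hdeg ▸ (natDegree_lineRestriction_le v w f).trans_lt hd

theorem eval_zero_eq_zero_of_forall_smul [Infinite k] {v : σ → k}
    (h : ∀ c : k, c ≠ 0 → eval (c • v) f = 0) : eval 0 f = 0 := by
  have hzero : lineRestriction 0 v f = 0 := by
    refine Polynomial.eq_zero_of_infinite_isRoot _
      ((Set.finite_singleton (0 : k)).infinite_compl.mono fun c hc => ?_)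
    simpa [eval_lineRestriction, aeval_eq_eval] using h c hc
  simpa [hzero, aeval_eq_eval] using (eval_lineRestriction 0 v 0 f).symm

theorem exists_dual_eval_eq [Infinite k] (hφ : φ.IsHomogeneous 1) (hφ0 : φ ≠ 0) :
    ∃ ψ : Dual k (σ → k), ψ ≠ 0 ∧ ∀ v, eval v φ = ψ v := by
  obtain ⟨ψ, hψ⟩ := exists_linearMap_aeval_eq hφ k
  refine ⟨ψ, ?_, hψ⟩
  rintro rfl
  exact hφ0 (MvPolynomial.funext fun v => hψ v)

theorem linear_dvd_of_forall_eval_eq_zero [Infinite k] (hφ : φ.IsHomogeneous 1) (hφ0 : φ ≠ 0)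
    (h : ∀ v, eval v φ = 0 → eval v f = 0) : φ ∣ f := by
  obtain ⟨ψ, hψ0, hψ⟩ := exists_dual_eval_eq hφ hφ0
  obtain ⟨b, hb⟩ : ∃ b, ψ b = 1 := LinearMap.surjective hψ0 1
  -- The substitution `x ↦ x - φ(x) b` is a projection onto the hyperplane `φ = 0`, so it kills `f`,
  -- and it is congruent to the identity modulo `φ`.
  have hproj : aeval (fun i => X i - φ * C (b i)) f = 0 := by
    refine MvPolynomial.funext fun v => ?_
    rw [← aeval_eq_eval, comp_aeval_apply, map_zero, aeval_eq_eval]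
    have hv : (fun i => aeval v (X i - φ * C (b i))) = v - ψ v • b := funext fun i => by simp [hψ]
    exact h _ (by rw [hv, hψ, map_sub, map_smul, hb, smul_eq_mul, mul_one, sub_self])
  have hdvd : φ ∣ aeval (fun i => X i - φ * C (b i)) f - f := dvd_aeval_sub_self fun i => by simp
  rwa [hproj, zero_sub, dvd_neg] at hdvd

theorem vanishesToOrder_sub_single_of_linear_mul [DecidableEq ι]
    {φ : ι → MvPolynomial σ k} {g : MvPolynomial σ k} {T : ι → Finset (ℙ k (σ → k))}
    {m : ι → ℕ} {i : ι}
    (hhom : (φ i).IsHomogeneous 1) (hne : φ i ≠ 0)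
    (honline : ∀ P ∈ T i, eval P.rep (φ i) = 0)
    (hoff : ∀ j ≠ i, ∀ P ∈ T j, eval P.rep (φ i) ≠ 0)
    (h : ∀ j, ∀ P ∈ T j, ∀ c : k, c ≠ 0 → VanishesToOrder (c • P.rep) (m j) (φ i * g))
    (j : ι) (P : ℙ k (σ → k)) (hP : P ∈ T j) (c : k) (hc : c ≠ 0) :
    VanishesToOrder (c • P.rep) ((m - Pi.single i 1 : ι → ℕ) j) g := by
  have heval := eval_smul_of_isHomogeneous_one hhom c P.rep
  rcases eq_or_ne j i with rfl | hji
  · rw [Pi.sub_apply, Pi.single_eq_same]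
    exact (h j P hP c hc).pred_of_linear_mul hhom hne (by rw [heval, honline P hP, mul_zero])
  · rw [Pi.sub_apply, Pi.single_eq_of_ne hji, tsub_zero]
    exact (h j P hP c hc).of_mul_of_eval_ne_zero (heval ▸ mul_ne_zero hc (hoff j hji P hP))

variable [AddCommGroup V] [Module k V]

theorem exists_forall_notMem_span_singleton [Infinite k] [Finite ι] (hV : 1 < finrank k V)
    (p : ι → V) : ∃ w, ∀ i, w ∉ Submodule.span k {p i} := by
  by_contra! h
  obtain ⟨i, hi⟩ := Subspace.exists_eq_top_of_iUnion_eq_univ (k := k)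
    (p := fun i => Submodule.span k {p i}) (Set.eq_univ_of_forall fun w => Set.mem_iUnion.2 (h w))
  have hle := finrank_span_le_card (R := k) {p i}
  rw [hi, finrank_top, Set.toFinset_singleton, Finset.card_singleton] at hle
  omega

theorem exists_forall_smul_eq_add_smul [Infinite k] [Finite ι] (hV : finrank k V = 2) {v : V}
    (hv : v ≠ 0) {p : ι → V} (hp : ∀ i, p i ≠ 0) :
    ∃ w, ∀ i, ∃ a z : k, a ≠ 0 ∧ a • p i = v + z • w := by
  obtain ⟨w, hw⟩ := exists_forall_notMem_span_singleton (k := k) (by omega)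
    (fun o : Option ι => o.elim v p)
  refine ⟨w, fun i => ?_⟩
  have hli : LinearIndependent k ![p i, w] := (LinearIndependent.pair_iff' (hp i)).2
    fun a ha => hw (some i) (Submodule.mem_span_singleton.2 ⟨a, ha⟩)
  have hv' : v ∈ Submodule.span k {p i, w} := by
    have : FiniteDimensional k V := finite_of_finrank_pos (by omega)
    have htop := hli.span_eq_top_of_card_eq_finrank' (by simp [hV])
    rw [Matrix.range_cons_cons_empty] at htop
    rw [htop]
    trivial
  obtain ⟨a, b, rfl⟩ := Submodule.mem_span_pair.1 hv'
  refine ⟨a, -b, ?_, by simp⟩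
  rintro rfl
  have hb : b ≠ 0 := by
    rintro rfl
    simp at hv
  exact hw none (Submodule.mem_span_singleton.2 ⟨b⁻¹, by simp [hb]⟩)

theorem eval_eq_zero_of_vanishesToOrder [Infinite k] {V : Submodule k (σ → k)}
    (hV : finrank k V = 2) {T : Finset (ℙ k (σ → k))} (hT : ∀ P ∈ T, P.rep ∈ V)
    (hf : ∀ P ∈ T, ∀ c : k, c ≠ 0 → VanishesToOrder (c • P.rep) m f)
    (hd : f.totalDegree < T.card * m) {v : σ → k} (hv : v ∈ V) : eval v f = 0 := by
  obtain ⟨hcard, hm⟩ : T.card ≠ 0 ∧ m ≠ 0 := mul_ne_zero_iff.1 (by omega)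
  rcases eq_or_ne v 0 with rfl | hv0
  · obtain ⟨P, hP⟩ := Finset.card_ne_zero.1 hcard
    exact eval_zero_eq_zero_of_forall_smul fun c hc => (hf P hP c hc).eval_eq_zero hm
  obtain ⟨w, hw⟩ := exists_forall_smul_eq_add_smul hV (v := ⟨v, hv⟩) (by simpa using hv0)
    (p := fun P : T => ⟨P.1.rep, hT P P.2⟩) fun P => by simpa using P.1.rep_nonzero
  choose a z ha hz using hw
  replace hz (P : T) : a P • P.1.rep = v + z P • w := congrArg Subtype.val (hz P)
  have hinj : Function.Injective z := by
    intro P Q hPQ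
    apply Subtype.ext
    rw [← P.1.mk_rep, ← Q.1.mk_rep, Projectivization.mk_eq_mk_iff']
    refine ⟨(a P)⁻¹ * a Q, ?_⟩
    rw [mul_smul, hz, ← hPQ, ← hz, inv_smul_smul₀ (ha P)]
  have hzero : lineRestriction v w f = 0 :=
    lineRestriction_eq_zero_of_vanishesToOrder (s := Finset.univ) hinj.injOn
      (fun P _ => hz P ▸ hf P P.2 (a P) (ha P)) (by simpa using hd)
  simpa [hzero, aeval_eq_eval] using (eval_lineRestriction v w.1 0 f).symm

theorem linear_dvd_of_vanishesToOrder [Infinite k] {φ f : MvPolynomial (Fin 3) k}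
    (hφ : φ.IsHomogeneous 1) (hφ0 : φ ≠ 0) {T : Finset (ℙ k (Fin 3 → k))}
    (hT : ∀ P ∈ T, eval P.rep φ = 0)
    (hf : ∀ P ∈ T, ∀ c : k, c ≠ 0 → VanishesToOrder (c • P.rep) m f)
    (hd : f.totalDegree < T.card * m) : φ ∣ f := by
  obtain ⟨ψ, hψ0, hψ⟩ := exists_dual_eval_eq hφ hφ0
  have hrank : finrank k ψ.ker = 2 := by
    have hadd := Module.Dual.finrank_ker_add_one_of_ne_zero hψ0
    rw [Module.finrank_fin_fun] at hadd
    omega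
  refine linear_dvd_of_forall_eval_eq_zero hφ hφ0 fun v hv =>
    eval_eq_zero_of_vanishesToOrder hrank (fun P hP => ?_) hf hd ?_
  · rw [LinearMap.mem_ker, ← hψ, hT P hP]
  · rw [LinearMap.mem_ker, ← hψ, hv]

end Field

theorem sum_tsub_le_sum_sub_single_tsub_add_one {ι : Type*} [Fintype ι] [DecidableEq ι]
    (m q : ι → ℕ) (i : ι) :
    ∑ j, (m j - q j) ≤ ∑ j, ((m - Pi.single i 1 : ι → ℕ) j - q j) + 1 := by
  calc ∑ j, (m j - q j)
      ≤ ∑ j, (((m - Pi.single i 1 : ι → ℕ) j - q j) + (Pi.single i 1 : ι → ℕ) j) :=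
        Finset.sum_le_sum fun j _ => by rw [Pi.sub_apply]; omega
    _ = ∑ j, ((m - Pi.single i 1 : ι → ℕ) j - q j) + 1 := by simp [Finset.sum_add_distrib]

theorem le_add_sum_tsub_div {t : ℕ} (ht : 0 < t) (s e : ℕ) :
    (s + 1) * t + s ≤ e + ∑ i : Fin t, (2 * s + 1 - e / (i + 1)) := by
  induction t, ht using Nat.le_induction with
  | base =>
    simp only [Finset.univ_unique, Finset.sum_singleton, Fin.val_eq_zero, zero_add, Nat.div_one]
    omega
  | succ t ht ih =>
    rw [Fin.sum_univ_castSucc, mul_add_one]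
    simp only [Fin.val_castSucc, Fin.val_last]
    -- Either the new term is at least `s + 1`, or `e` alone is already large enough.
    rcases le_or_gt (e / (t + 1)) s with h | h
    · omega
    · have he : (s + 1) * t + e / (t + 1) ≤ e := calc
        (s + 1) * t + e / (t + 1) ≤ e / (t + 1) * t + e / (t + 1) := by gcongr; exact h
        _ = e / (t + 1) * (t + 1) := (mul_add_one _ _).symm
        _ ≤ e := Nat.div_mul_le_self e (t + 1)
      omega

section LineConfiguration

open MvPolynomial

variable {k ι : Type*} [Field k] {W : Finset (ℙ k (Fin 3 → k))}

theorem vanishesToOrder_of_mem_fatIdeal {P : ℙ k (Fin 3 → k)} {m : ℕ}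
    {f : MvPolynomial (Fin 3) k} (hf : f ∈ fatIdeal k W m) (hP : P ∈ W) (c : k) :
    VanishesToOrder (c • P.rep) m f := by
  simp only [fatIdeal, Ideal.mem_iInf] at hf
  exact vanishesToOrder_of_mem_pow (fun g (hg : g ∈ pointIdeal k P) => hg c) (hf P hP)

theorem mem_pointIdeal_of_isHomogeneous_one {P : ℙ k (Fin 3 → k)} {φ : MvPolynomial (Fin 3) k}
    (hφ : φ.IsHomogeneous 1) (hP : eval P.rep φ = 0) : φ ∈ pointIdeal k P := by
  intro c
  rw [eval_smul_of_isHomogeneous_one hφ, hP, mul_zero]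

variable [Fintype ι] {φ : ι → MvPolynomial (Fin 3) k}

theorem exists_mem_fatIdeal_isHomogeneous (hhom : ∀ i, (φ i).IsHomogeneous 1)
    (hne : ∀ i, φ i ≠ 0) (hW : ∀ P ∈ W, ∃ i, eval P.rep (φ i) = 0) (m : ℕ) :
    ∃ f ∈ fatIdeal k W m, f ≠ 0 ∧ f.IsHomogeneous (Fintype.card ι * m) := by
  refine ⟨(∏ i, φ i) ^ m, ?_, pow_ne_zero m (Finset.prod_ne_zero_iff.2 fun i _ => hne i), ?_⟩
  · simp only [fatIdeal, Ideal.mem_iInf]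
    intro P hP
    obtain ⟨i, hi⟩ := hW P hP
    exact Ideal.pow_mem_pow (Ideal.mem_of_dvd _ (Finset.dvd_prod_of_mem φ (Finset.mem_univ i))
      (mem_pointIdeal_of_isHomogeneous_one (hhom i) hi)) m
  · simpa using (IsHomogeneous.prod Finset.univ φ (fun _ => 1) fun i _ => hhom i).pow m

/-- `e` is the degree of what is left of the curve `f = 0` once no line can be removed any more. -/
theorem exists_add_sum_le_totalDegree [Infinite k] {T : ι → Finset (ℙ k (Fin 3 → k))}
    (hhom : ∀ i, (φ i).IsHomogeneous 1) (hne : ∀ i, φ i ≠ 0) (hT : ∀ i, 0 < (T i).card)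
    (honline : ∀ i, ∀ P ∈ T i, eval P.rep (φ i) = 0)
    (hoff : ∀ i j, i ≠ j → ∀ P ∈ T i, eval P.rep (φ j) ≠ 0)
    {f : MvPolynomial (Fin 3) k} (hf : f ≠ 0) {m : ι → ℕ}
    (hm : ∀ i, ∀ P ∈ T i, ∀ c : k, c ≠ 0 → VanishesToOrder (c • P.rep) (m i) f) :
    ∃ e, e + ∑ i, (m i - e / (T i).card) ≤ f.totalDegree := by
  classical
  induction hd : f.totalDegree using Nat.strong_induction_on generalizing f m with
  | _ d ih =>
  subst hd
  by_cases h : ∃ i, f.totalDegree < (T i).card * m i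
  · obtain ⟨i, hi⟩ := h
    obtain ⟨g, rfl⟩ :=
      linear_dvd_of_vanishesToOrder (hhom i) (hne i) (honline i) (hm i) hi
    have hg : g ≠ 0 := right_ne_zero_of_mul hf
    have hdeg : (φ i * g).totalDegree = g.totalDegree + 1 := by
      rw [totalDegree_mul_of_isDomain (hne i) hg, (hhom i).totalDegree (hne i), add_comm]
    obtain ⟨e, he⟩ := ih g.totalDegree (by omega) hg (vanishesToOrder_sub_single_of_linear_mul
      (hhom i) (hne i) (honline i) (fun j hji => hoff j i hji) hm) rfl
    have hsum := sum_tsub_le_sum_sub_single_tsub_add_one m (fun j => e / (T j).card) i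
    exact ⟨e, by omega⟩
  · push Not at h
    refine ⟨f.totalDegree, ?_⟩
    rw [Finset.sum_eq_zero, add_zero]
    intro i _
    rw [Nat.sub_eq_zero_iff_le, Nat.le_div_iff_mul_le (hT i), mul_comm]
    exact h i

end LineConfiguration

theorem stmt16_general (k : Type*) [Field k] [Infinite k]
    (t : ℕ) (ht : 0 < t)
    (W : Finset (ℙ k (Fin 3 → k)))
    (T : Fin t → Finset (ℙ k (Fin 3 → k)))
    (φ : Fin t → MvPolynomial (Fin 3) k)
    (hhom : ∀ i, (φ i).IsHomogeneous 1)
    (hne : ∀ i, φ i ≠ 0)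
    (hW : ∀ P, P ∈ W ↔ ∃ i, P ∈ T i)
    (hcard : ∀ i : Fin t, (i : ℕ) + 1 ≤ (T i).card)
    (honline : ∀ i, ∀ P ∈ T i, MvPolynomial.eval P.rep (φ i) = 0)
    (hoff : ∀ i j, i ≠ j → ∀ P ∈ T i, MvPolynomial.eval P.rep (φ j) ≠ 0)
    (s : ℕ) :
    (s + 1) * alphaDeg k (fatIdeal k W 1) + s ≤ alphaDeg k (fatIdeal k W (2 * s + 1)) := by
  have hcover : ∀ P ∈ W, ∃ i, MvPolynomial.eval P.rep (φ i) = 0 := fun P hP =>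
    ((hW P).1 hP).imp fun i => honline i P
  have halpha : alphaDeg k (fatIdeal k W 1) ≤ t :=
    Nat.sInf_le (by simpa using exists_mem_fatIdeal_isHomogeneous hhom hne hcover 1)
  refine le_csInf ⟨_, exists_mem_fatIdeal_isHomogeneous hhom hne hcover _⟩ ?_
  rintro d ⟨f, hf, hf0, hfd⟩
  obtain ⟨e, he⟩ := exists_add_sum_le_totalDegree hhom hne
    (fun i => (Nat.succ_pos i).trans_le (hcard i)) honline hoff hf0
    fun i P hP c _ => vanishesToOrder_of_mem_fatIdeal hf ((hW P).2 ⟨i, hP⟩) c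
  calc (s + 1) * alphaDeg k (fatIdeal k W 1) + s ≤ (s + 1) * t + s := by gcongr
    _ ≤ e + ∑ i : Fin t, (2 * s + 1 - e / (i + 1)) := le_add_sum_tsub_div ht s e
    _ ≤ e + ∑ i : Fin t, (2 * s + 1 - e / (T i).card) := by gcongr with i; exact hcard i
    _ ≤ f.totalDegree := he
    _ = d := hfd.totalDegree hf0

theorem stmt16 (k : Type*) [Field k] [IsAlgClosed k] [CharZero k]
    (t : ℕ) (ht : 0 < t)
    (W : Finset (ℙ k (Fin 3 → k)))
    (T : Fin t → Finset (ℙ k (Fin 3 → k)))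
    (φ : Fin t → MvPolynomial (Fin 3) k)
    (hhom : ∀ i, (φ i).IsHomogeneous 1)
    (hne : ∀ i, φ i ≠ 0)
    (hprop : ∀ i j, i ≠ j → ∀ a : k, φ i ≠ a • φ j)
    (hW : ∀ P, P ∈ W ↔ ∃ i, P ∈ T i)
    (hcard : ∀ i : Fin t, (T i).card = (i : ℕ) + 1)
    (honline : ∀ i, ∀ P ∈ T i, MvPolynomial.eval (Projectivization.rep P) (φ i) = 0)
    (hone : ∀ P ∈ W, ∀ i j : Fin t, i ≠ j →
      ¬(MvPolynomial.eval (Projectivization.rep P) (φ i) = 0 ∧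
        MvPolynomial.eval (Projectivization.rep P) (φ j) = 0))
    (r : ℕ) (hr : 1 ≤ r) :
    r * alphaDeg k (fatIdeal k W 1) + (r - 1) ≤ alphaDeg k (fatIdeal k W (2 * r - 1)) := by
  obtain ⟨s, rfl⟩ := Nat.exists_eq_add_of_le' hr
  exact stmt16_general k t ht W T φ hhom hne hW (fun i => (hcard i).ge) honline
    (fun i j hij P hP h => hone P ((hW P).2 ⟨i, hP⟩) i j hij ⟨honline i P hP, h⟩) s
end

section
/- Let W ⊂ P^2 be a line count configuration of type (c_1, c_2, …, c_t) over an algebraically closed field k of characteristic 0, where 1 ≤ c_1 ≤ c_2 ≤ ⋯ ≤ c_t and c_i ≥ i for all 1 ≤ i ≤ t. Then for every integer r ≥ 1, α(2rW) ≥ r·α(W) + r. -/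
open scoped LinearAlgebra.Projectivization

/- Write `F ∈ I_{mW}` of degree `d` as `F = (∏ φ_i ^ a_i) G` with no `φ_i` dividing `G`. A point of
`T_i` lies on `L_i` only, and there the product has multiplicity at most `a_i`; as multiplicities
add up, `G` has multiplicity at least `m - a_i` at each of the `c_i ≥ i` points of `T_i`. By Bézout
on `L_i`, `i (m - a_i) ≤ deg G`, and summing over `i` yields `m (t + 1) ≤ 2 d`. On the other hand
`∏ φ_i ∈ I_W` shows `α(W) ≤ t`, hence `m (α(W) + 1) ≤ 2 α(mW)` for every `m`. -/

section Expansion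

variable {R A B σ : Type*}

open Polynomial (C X)

section CommSemiring

variable [CommSemiring R] [CommSemiring A] [Algebra R A] [CommSemiring B] [Algebra R B]

/-- The expansion `F(v + s w)` of a polynomial `F` in the parameter `s` of the line through `v` with
direction `w`. The coordinates of `w` may lie in an `R`-algebra, so that `w` can be generic. -/
noncomputable def expandAlong (v : σ → R) (w : σ → A) : MvPolynomial σ R →ₐ[R] Polynomial A :=
  MvPolynomial.aeval fun i => C (algebraMap R A (v i)) + X * C (w i)

theorem map_expandAlong (f : A →ₐ[R] B) (v : σ → R) (w : σ → A) (F : MvPolynomial σ R) :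
    (expandAlong v w F).map f = expandAlong v (f ∘ w) F := by
  have h : (Polynomial.mapAlgHom f).comp (expandAlong v w) = expandAlong v (f ∘ w) :=
    MvPolynomial.algHom_ext fun i => by simp [expandAlong]
  exact DFunLike.congr_fun h F

theorem eval_expandAlong (v w : σ → R) (F : MvPolynomial σ R) (s : R) :
    (expandAlong v w F).eval s = MvPolynomial.eval (v + s • w) F := by
  have h : (Polynomial.aeval s).comp (expandAlong v w) = MvPolynomial.aeval (v + s • w) :=
    MvPolynomial.algHom_ext fun i => by simp [expandAlong, mul_comm s]
  simpa using DFunLike.congr_fun h F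

theorem coeff_zero_expandAlong (v : σ → R) (w : σ → A) (F : MvPolynomial σ R) :
    (expandAlong v w F).coeff 0 = algebraMap R A (MvPolynomial.eval v F) := by
  have h : ((Polynomial.aeval (0 : A)).restrictScalars R).comp (expandAlong v w) =
      (Algebra.ofId R A).comp (MvPolynomial.aeval v) :=
    MvPolynomial.algHom_ext fun i => by simp [expandAlong, Algebra.ofId_apply]
  simpa [Polynomial.coeff_zero_eq_aeval_zero, Algebra.ofId_apply] using DFunLike.congr_fun h F

theorem expandAlong_of_isHomogeneous_one {p : MvPolynomial σ R} (hp : p.IsHomogeneous 1)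
    (v : σ → R) (w : σ → A) :
    expandAlong v w p =
      C (algebraMap R A (MvPolynomial.eval v p)) + X * C (MvPolynomial.aeval w p) := by
  rw [← MvPolynomial.mem_homogeneousSubmodule,
    MvPolynomial.homogeneousSubmodule_one_eq_span_X] at hp
  induction hp using Submodule.span_induction with
  | mem p hp =>
    obtain ⟨i, rfl⟩ := hp
    simp [expandAlong]
  | zero => simp
  | add p q _ _ hp hq =>
    simp only [map_add, hp, hq]
    ring
  | smul a p _ hp =>
    simp only [map_smul, hp, MvPolynomial.smul_eval]
    simp only [Algebra.smul_def, Polynomial.algebraMap_apply, map_mul]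
    ring

theorem natDegree_expandAlong_le (v w : σ → R) (F : MvPolynomial σ R) :
    (expandAlong v w F).natDegree ≤ F.totalDegree := by
  have h := MvPolynomial.aeval_natDegree_le F le_rfl
    (fun i => C (v i) + X * C (w i)) (n := 1) fun i => by compute_degree
  simpa [expandAlong] using h

theorem aeval_smul_of_isHomogeneous {F : MvPolynomial σ R} {d : ℕ} (hF : F.IsHomogeneous d)
    (b : A) (x : σ → A) :
    MvPolynomial.aeval (b • x) F = b ^ d * MvPolynomial.aeval x F := by
  simp only [MvPolynomial.aeval_def, MvPolynomial.eval₂_eq, Finset.mul_sum]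
  refine Finset.sum_congr rfl fun m hm => ?_
  simp only [Pi.smul_apply, smul_eq_mul, mul_pow, Finset.prod_mul_distrib,
    Finset.prod_pow_eq_pow_sum, hF.degree_eq_sum_deg_support hm]
  ring

theorem eval_smul_of_isHomogeneous {F : MvPolynomial σ R} {d : ℕ} (hF : F.IsHomogeneous d)
    (b : R) (x : σ → R) :
    MvPolynomial.eval (b • x) F = b ^ d * MvPolynomial.eval x F := by
  simpa only [MvPolynomial.aeval_eq_eval] using aeval_smul_of_isHomogeneous hF b x

theorem expandAlong_smul_smul {F : MvPolynomial σ R} {d : ℕ} (hF : F.IsHomogeneous d)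
    (b : R) (v : σ → R) (w : σ → A) :
    expandAlong (b • v) (b • w) F = C (algebraMap R A b) ^ d * expandAlong v w F := by
  rw [expandAlong, expandAlong, ← aeval_smul_of_isHomogeneous hF]
  congr 2
  funext i
  simp only [Pi.smul_apply, smul_eq_mul, Algebra.smul_def, map_mul]
  ring

end CommSemiring

theorem taylor_expandAlong [CommRing R] (a : R) (v w : σ → R) (F : MvPolynomial σ R) :
    (expandAlong v w F).taylor a = expandAlong (v + a • w) w F := by
  have h : (Polynomial.taylorAlgHom a).comp (expandAlong v w) = expandAlong (v + a • w) w :=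
    MvPolynomial.algHom_ext fun i => by
      simp only [AlgHom.comp_apply, expandAlong, MvPolynomial.aeval_X, Algebra.algebraMap_self,
        RingHom.id_apply, Polynomial.taylorAlgHom_apply, map_add, Polynomial.taylor_C,
        Polynomial.taylor_X, Pi.add_apply, Pi.smul_apply, smul_eq_mul, map_mul]
      ring
  exact DFunLike.congr_fun h F

theorem expandAlong_ne_zero [Field R] [Infinite R] {F : MvPolynomial σ R} {d : ℕ}
    (hF : F.IsHomogeneous d) (v : σ → R) {w : σ → R} (hw : MvPolynomial.eval w F ≠ 0) :
    expandAlong v w F ≠ 0 := by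
  intro h
  have hflip : expandAlong w v F = 0 := by
    refine Polynomial.eq_zero_of_infinite_isRoot _
      ((Set.finite_singleton (0 : R)).infinite_compl.mono fun s (hs : s ≠ 0) => ?_)
    have hline : w + s • v = s • (v + s⁻¹ • w) := by rw [smul_add, smul_inv_smul₀ hs, add_comm]
    rw [Set.mem_ofPred_eq, Polynomial.IsRoot, eval_expandAlong, hline,
      eval_smul_of_isHomogeneous hF, ← eval_expandAlong, h, Polynomial.eval_zero, mul_zero]
  refine hw ?_
  simpa [hflip] using (eval_expandAlong w v F 0).symm

end Expansion

section Multiplicity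

variable {R σ : Type*} [CommRing R]

/-- The multiplicity at the point `v` of the hypersurface `F = 0` of affine space: the order of
vanishing of `F` at `v` along the generic line through `v`. It is `⊤` for `F = 0`. -/
noncomputable def multiplicityAt (v : σ → R) (F : MvPolynomial σ R) : ℕ∞ :=
  emultiplicity Polynomial.X (expandAlong v (MvPolynomial.X (R := R)) F)

theorem multiplicityAt_mul [IsDomain R] (v : σ → R) (F G : MvPolynomial σ R) :
    multiplicityAt v (F * G) = multiplicityAt v F + multiplicityAt v G := by
  rw [multiplicityAt, map_mul, emultiplicity_mul Polynomial.prime_X, multiplicityAt, multiplicityAt]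

theorem multiplicityAt_prod_pow [IsDomain R] {ι : Type*} (v : σ → R) (s : Finset ι)
    (F : ι → MvPolynomial σ R) (a : ι → ℕ) :
    multiplicityAt v (∏ i ∈ s, F i ^ a i) = ∑ i ∈ s, a i * multiplicityAt v (F i) := by
  simp only [multiplicityAt, map_prod, map_pow, Finset.emultiplicity_prod Polynomial.prime_X,
    emultiplicity_pow Polynomial.prime_X]

theorem multiplicityAt_eq_zero_iff {v : σ → R} {F : MvPolynomial σ R} :
    multiplicityAt v F = 0 ↔ MvPolynomial.eval v F ≠ 0 := by
  rw [multiplicityAt, emultiplicity_eq_zero, Polynomial.X_dvd_iff, coeff_zero_expandAlong,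
    MvPolynomial.algebraMap_eq, MvPolynomial.C_eq_zero]

theorem multiplicityAt_le_one_of_isHomogeneous_one {p : MvPolynomial σ R}
    (hp : p.IsHomogeneous 1) (h0 : p ≠ 0) (v : σ → R) : multiplicityAt v p ≤ 1 := by
  suffices multiplicityAt v p < (2 : ℕ) by simpa using this
  refine emultiplicity_lt_iff_not_dvd.mpr fun h => h0 ?_
  have hcoeff := Polynomial.X_pow_dvd_iff.mp h 1 one_lt_two
  simpa [expandAlong_of_isHomogeneous_one hp] using hcoeff

theorem multiplicityAt_prod_pow_le [IsDomain R] {ι : Type*} [Fintype ι]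
    {p : ι → MvPolynomial σ R} (hhom : ∀ i, (p i).IsHomogeneous 1) (hne : ∀ i, p i ≠ 0)
    {v : σ → R} {j : ι} (hv : ∀ i, i ≠ j → MvPolynomial.eval v (p i) ≠ 0) (a : ι → ℕ) :
    multiplicityAt v (∏ i, p i ^ a i) ≤ a j := by
  rw [multiplicityAt_prod_pow, Fintype.sum_eq_single j fun i hij => by
    rw [multiplicityAt_eq_zero_iff.mpr (hv i hij), mul_zero]]
  exact mul_le_of_le_one_right' (multiplicityAt_le_one_of_isHomogeneous_one (hhom j) (hne j) v)

theorem multiplicityAt_le_emultiplicity_expandAlong {A : Type*} [CommRing A] [Algebra R A]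
    (v : σ → R) (w : σ → A) (F : MvPolynomial σ R) :
    multiplicityAt v F ≤ emultiplicity Polynomial.X (expandAlong v w F) := by
  have h := le_emultiplicity_map (Polynomial.mapAlgHom (MvPolynomial.aeval (R := R) w))
    (a := Polynomial.X) (b := expandAlong v MvPolynomial.X F)
  have hw : MvPolynomial.aeval (R := R) w ∘ MvPolynomial.X = w := by
    funext i
    simp
  simpa [multiplicityAt, map_expandAlong, hw] using h

theorem multiplicityAt_smul_le {F : MvPolynomial σ R} {d : ℕ} (hF : F.IsHomogeneous d)
    {b : R} (hb : IsUnit b) (v : σ → R) : multiplicityAt (b • v) F ≤ multiplicityAt v F := by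
  have h := multiplicityAt_le_emultiplicity_expandAlong (b • v)
    (b • (MvPolynomial.X : σ → MvPolynomial σ R)) F
  have hunit : IsUnit (Polynomial.C (algebraMap R (MvPolynomial σ R) b) ^ d) :=
    ((hb.map _).map Polynomial.C).pow d
  rwa [expandAlong_smul_smul hF,
    emultiplicity_eq_of_associated_right (associated_unit_mul_left _ _ hunit)] at h

theorem multiplicityAt_add_smul_le (v w : σ → R) (a : R) (F : MvPolynomial σ R) :
    multiplicityAt (v + a • w) F ≤
      emultiplicity (Polynomial.X - Polynomial.C a) (expandAlong v w F) := by
  have h := multiplicityAt_le_emultiplicity_expandAlong (v + a • w) w F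
  have hX : Polynomial.taylorEquiv a (Polynomial.X - Polynomial.C a) = Polynomial.X := by
    change Polynomial.taylor a (Polynomial.X - Polynomial.C a) = Polynomial.X
    simp
  rw [← taylor_expandAlong, ← hX] at h
  exact h.trans_eq (emultiplicity_map_eq (Polynomial.taylorEquiv a))

end Multiplicity

section Bezout

theorem sum_emultiplicity_X_sub_C_le {R : Type*} [CommRing R] [IsDomain R] {g : Polynomial R}
    (hg : g ≠ 0) (s : Finset R) :
    ∑ a ∈ s, emultiplicity (Polynomial.X - Polynomial.C a) g ≤ g.natDegree := by
  classical
  have hcount : ∀ a, emultiplicity (Polynomial.X - Polynomial.C a) g = g.roots.count a := by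
    intro a
    rw [(Polynomial.finiteMultiplicity_X_sub_C a hg).emultiplicity_eq_multiplicity,
      Polynomial.count_roots, Polynomial.rootMultiplicity_eq_multiplicity, if_neg hg]
  simp only [hcount]
  calc ∑ a ∈ s, (g.roots.count a : ℕ∞)
      ≤ ∑ a ∈ s ∪ g.roots.toFinset, (g.roots.count a : ℕ∞) :=
        Finset.sum_le_sum_of_subset Finset.subset_union_left
    _ = g.roots.card := by
        rw [← Nat.cast_sum, Multiset.sum_count_eq_card fun a ha => by simp [ha]]
    _ ≤ g.natDegree := mod_cast g.card_roots'

open Module in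
theorem exists_dual_eval_eq_of_isHomogeneous_one {R σ : Type*} [CommSemiring R]
    {p : MvPolynomial σ R} (hp : p.IsHomogeneous 1) :
    ∃ l : Dual R (σ → R), ∀ x, l x = MvPolynomial.eval x p := by
  rw [← MvPolynomial.mem_homogeneousSubmodule,
    MvPolynomial.homogeneousSubmodule_one_eq_span_X] at hp
  induction hp using Submodule.span_induction with
  | mem p hp =>
    obtain ⟨i, rfl⟩ := hp
    exact ⟨LinearMap.proj i, by simp⟩
  | zero => exact ⟨0, by simp⟩
  | add p q _ _ hp hq =>
    obtain ⟨l, hl⟩ := hp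
    obtain ⟨l', hl'⟩ := hq
    exact ⟨l + l', by simp [hl, hl']⟩
  | smul a p _ hp =>
    obtain ⟨l, hl⟩ := hp
    exact ⟨a • l, by simp [hl, MvPolynomial.smul_eval]⟩

/- The substitution `x ↦ x - p(x) e`, where `p(e) = 1`, is the identity modulo `p` and projects onto
the hyperplane `p = 0`, so it kills `F`. -/
theorem dvd_of_forall_eval_eq_zero {k σ : Type*} [Field k] [Infinite k] {p F : MvPolynomial σ k}
    (hp : p.IsHomogeneous 1) (h : ∀ x, MvPolynomial.eval x p = 0 → MvPolynomial.eval x F = 0) :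
    p ∣ F := by
  obtain rfl | h0 := eq_or_ne p 0
  · exact zero_dvd_iff.mpr (MvPolynomial.funext fun x => by rw [h x (map_zero _), map_zero])
  obtain ⟨l, hl⟩ := exists_dual_eval_eq_of_isHomogeneous_one hp
  obtain ⟨e, he⟩ : ∃ e, l e = 1 := by
    refine LinearMap.surjective (fun hl0 => h0 (MvPolynomial.funext fun x => ?_)) 1
    rw [← hl, hl0, LinearMap.zero_apply, map_zero]
  let π := MvPolynomial.aeval (R := k) fun i => MvPolynomial.X i - p * MvPolynomial.C (e i)
  have hπ : π F = 0 := by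
    refine MvPolynomial.funext fun x => ?_
    have hcomp : MvPolynomial.eval x (π F) = MvPolynomial.eval (x - l x • e) F := by
      have hx : (MvPolynomial.aeval x).comp π = MvPolynomial.aeval (x - l x • e) :=
        MvPolynomial.algHom_ext fun i => by simp [π, hl, MvPolynomial.aeval_eq_eval]
      simpa using DFunLike.congr_fun hx F
    rw [hcomp, map_zero]
    refine h _ ?_
    rw [← hl, map_sub, map_smul, he, smul_eq_mul, mul_one, sub_self]
  have hmod : (Ideal.Quotient.mkₐ k (Ideal.span {p})).comp π =
      Ideal.Quotient.mkₐ k (Ideal.span {p}) :=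
    MvPolynomial.algHom_ext fun i => by
      simp [π, Ideal.Quotient.eq_zero_iff_mem.mpr (Ideal.mem_span_singleton_self p)]
  rw [← Ideal.mem_span_singleton, ← Ideal.Quotient.eq_zero_iff_mem]
  simpa [hπ] using (DFunLike.congr_fun hmod F).symm

open Module in
theorem exists_ker_le_span_pair {k V : Type*} [Field k] [AddCommGroup V] [Module k V]
    (hV : finrank k V = 3) {l : Dual k V} (hl : l ≠ 0) {w : V} (hw : l w = 0) (hw0 : w ≠ 0) :
    ∃ v, LinearMap.ker l ≤ Submodule.span k {v, w} := by
  have : FiniteDimensional k V := .of_finrank_pos (by omega)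
  have hker : finrank k (LinearMap.ker l) = 2 := by
    have := Dual.finrank_ker_add_one_of_ne_zero hl
    omega
  obtain ⟨v, hind⟩ := exists_linearIndependent_pair_of_one_lt_finrank (R := k)
    (by omega) (x := (⟨w, hw⟩ : LinearMap.ker l)) fun h => hw0 (congrArg Subtype.val h)
  have hspan := hind.span_eq_top_of_card_eq_finrank' (by simp [hker])
  refine ⟨v, fun u hu => ?_⟩
  have hmem : (⟨u, hu⟩ : LinearMap.ker l) ∈ Submodule.span k {v, ⟨w, hw⟩} := by
    rw [Set.pair_comm, ← Matrix.range_cons_cons_empty _ _ ![], hspan]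
    trivial
  obtain ⟨a, b, hab⟩ := Submodule.mem_span_pair.mp hmem
  exact Submodule.mem_span_pair.mpr ⟨a, b, congrArg Subtype.val hab⟩

variable {k : Type*} [Field k] [Infinite k]

theorem sum_multiplicityAt_le_of_mem_span_pair {σ : Type*} {F : MvPolynomial σ k} {d : ℕ}
    (hF : F.IsHomogeneous d) {v w : σ → k} (hw : MvPolynomial.eval w F ≠ 0)
    (T : Finset (ℙ k (σ → k))) (hT : ∀ P ∈ T, P.rep ∈ Submodule.span k {v, w}) :
    ∑ P ∈ T, multiplicityAt P.rep F ≤ d := by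
  classical
  let S := {P ∈ T | multiplicityAt P.rep F ≠ 0}
  have hcoord : ∀ P ∈ S, ∃ b s : k, b ≠ 0 ∧ P.rep = b • (v + s • w) := by
    intro P hP
    obtain ⟨hPT, hP0⟩ := Finset.mem_filter.mp hP
    obtain ⟨b, a, hab⟩ := Submodule.mem_span_pair.mp (hT P hPT)
    have hb : b ≠ 0 := by
      rintro rfl
      rw [zero_smul, zero_add] at hab
      have ha : a ≠ 0 := by
        rintro rfl
        exact P.rep_nonzero (by rw [← hab, zero_smul])
      refine hP0 (multiplicityAt_eq_zero_iff.mpr ?_)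
      rw [← hab, eval_smul_of_isHomogeneous hF]
      exact mul_ne_zero (pow_ne_zero d ha) hw
    exact ⟨b, b⁻¹ * a, hb, by rw [← hab, smul_add, smul_smul, mul_inv_cancel_left₀ hb]⟩
  choose! b s hb hbs using hcoord
  have hinj : Set.InjOn s S := by
    intro P hP Q hQ hPQ
    rw [← P.mk_rep, ← Q.mk_rep, Projectivization.mk_eq_mk_iff']
    exact ⟨b P * (b Q)⁻¹, by rw [hbs P hP, hbs Q hQ, hPQ, mul_smul, inv_smul_smul₀ (hb Q hQ)]⟩
  calc ∑ P ∈ T, multiplicityAt P.rep F = ∑ P ∈ S, multiplicityAt P.rep F :=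
        (Finset.sum_filter_ne_zero T).symm
    _ ≤ ∑ P ∈ S, emultiplicity (Polynomial.X - Polynomial.C (s P)) (expandAlong v w F) :=
        Finset.sum_le_sum fun P hP => by
          rw [hbs P hP]
          exact (multiplicityAt_smul_le hF (hb P hP).isUnit _).trans
            (multiplicityAt_add_smul_le v w (s P) F)
    _ = ∑ a ∈ S.image s, emultiplicity (Polynomial.X - Polynomial.C a) (expandAlong v w F) :=
        by rw [Finset.sum_image hinj]
    _ ≤ (expandAlong v w F).natDegree :=
        sum_emultiplicity_X_sub_C_le (expandAlong_ne_zero hF v hw) _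
    _ ≤ d := mod_cast (natDegree_expandAlong_le v w F).trans hF.totalDegree_le

theorem sum_multiplicityAt_le_of_not_dvd {p F : MvPolynomial (Fin 3) k} {d : ℕ}
    (hp : p.IsHomogeneous 1) (h0 : p ≠ 0) (hF : F.IsHomogeneous d) (hpF : ¬p ∣ F)
    (T : Finset (ℙ k (Fin 3 → k))) (hT : ∀ P ∈ T, MvPolynomial.eval P.rep p = 0) :
    ∑ P ∈ T, multiplicityAt P.rep F ≤ d := by
  obtain ⟨w, hwp, hwF⟩ : ∃ w, MvPolynomial.eval w p = 0 ∧ MvPolynomial.eval w F ≠ 0 := by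
    by_contra! h
    exact hpF (dvd_of_forall_eval_eq_zero hp h)
  obtain rfl | hw0 := eq_or_ne w 0
  · have hne : ∀ v, MvPolynomial.eval v F ≠ 0 := by
      intro v
      rw [← zero_smul k v, eval_smul_of_isHomogeneous hF] at hwF
      exact right_ne_zero_of_mul hwF
    simp [multiplicityAt_eq_zero_iff.mpr (hne _)]
  obtain ⟨l, hl⟩ := exists_dual_eval_eq_of_isHomogeneous_one hp
  have hl0 : l ≠ 0 := by
    rintro rfl
    exact h0 (MvPolynomial.funext fun x => by simp [← hl])
  obtain ⟨v, hv⟩ := exists_ker_le_span_pair (by simp) hl0 ((hl w).trans hwp) hw0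
  exact sum_multiplicityAt_le_of_mem_span_pair hF hwF T fun P hP => hv ((hl _).trans (hT P hP))

end Bezout

section LineCount

theorem exists_eq_prod_pow_mul_and_not_dvd {M ι : Type*} [CommMonoidWithZero M] [WfDvdMonoid M]
    [Fintype ι] {p : ι → M} (hp : ∀ i, ¬IsUnit (p i)) {x : M} (hx : x ≠ 0) :
    ∃ (a : ι → ℕ) (y : M), x = (∏ i, p i ^ a i) * y ∧ ∀ i, ¬p i ∣ y := by
  classical
  induction x using (wellFounded_dvdNotUnit (α := M)).induction with
  | _ x ih =>
    by_cases h : ∃ i, p i ∣ x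
    · obtain ⟨i, y, rfl⟩ := h
      have hy : y ≠ 0 := right_ne_zero_of_mul hx
      obtain ⟨a, z, rfl, hz⟩ := ih y ⟨hy, p i, hp i, mul_comm _ _⟩ hy
      refine ⟨a + Pi.single i 1, z, ?_, hz⟩
      have hsingle : ∏ j, p j ^ (Pi.single i 1 : ι → ℕ) j = p i := by
        rw [Fintype.prod_eq_single i fun j hj => by rw [Pi.single_eq_of_ne hj, pow_zero],
          Pi.single_eq_same, pow_one]
      simp only [Pi.add_apply, pow_add, Finset.prod_mul_distrib, hsingle]
      ac_rfl
    · push Not at h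
      exact ⟨0, x, by simp, h⟩

theorem isHomogeneous_of_mul_left {R σ : Type*} [CommRing R] [IsDomain R]
    {p q : MvPolynomial σ R} {m d : ℕ} (hp : p.IsHomogeneous m) (h0 : p * q ≠ 0)
    (h : (p * q).IsHomogeneous d) : ∃ e, d = m + e ∧ q.IsHomogeneous e := by
  have hp0 : p ≠ 0 := left_ne_zero_of_mul h0
  have hd : d = m + q.totalDegree := by
    rw [← h.totalDegree h0, MvPolynomial.totalDegree_mul_of_isDomain hp0 (right_ne_zero_of_mul h0),
      hp.totalDegree hp0]
  refine ⟨q.totalDegree, hd, ?_⟩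
  let := MvPolynomial.gradedAlgebra (σ := σ) (R := R)
  have hcomponent : p * q = p * DirectSum.decompose (MvPolynomial.homogeneousSubmodule σ R) q
      q.totalDegree := by
    have := DirectSum.coe_decompose_mul_add_of_left_mem
      (𝒜 := MvPolynomial.homogeneousSubmodule σ R) (j := q.totalDegree) (b := q) hp
    rwa [← hd, DirectSum.decompose_of_mem_same _ h] at this
  have hmem := SetLike.coe_mem
    (DirectSum.decompose (MvPolynomial.homogeneousSubmodule σ R) q q.totalDegree)
  rwa [← mul_left_cancel₀ hp0 hcomponent] at hmem

theorem le_multiplicityAt_of_mem_pointIdeal_pow {k : Type*} [Field k] {P : ℙ k (Fin 3 → k)} {m : ℕ}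
    {F : MvPolynomial (Fin 3) k} (hF : F ∈ pointIdeal k P ^ m) :
    m ≤ multiplicityAt P.rep F := by
  have hle : pointIdeal k P ≤
      (Ideal.span {Polynomial.X}).comap (expandAlong P.rep (MvPolynomial.X (R := k))) := by
    intro f hf
    have hP : MvPolynomial.eval P.rep f = 0 := by simpa only [one_smul] using hf 1
    rw [Ideal.mem_comap, Ideal.mem_span_singleton, Polynomial.X_dvd_iff, coeff_zero_expandAlong,
      hP, map_zero]
  have hmem := (Ideal.pow_right_mono hle m).trans (Ideal.le_comap_pow _ m) hF
  rw [Ideal.mem_comap, Ideal.span_singleton_pow, Ideal.mem_span_singleton] at hmem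
  exact le_emultiplicity_of_pow_dvd hmem

variable {k : Type*} [Field k] {t : ℕ} {W : Finset (ℙ k (Fin 3 → k))}
  {T : Fin t → Finset (ℙ k (Fin 3 → k))} {φ : Fin t → MvPolynomial (Fin 3) k}

theorem prod_mem_fatIdeal_one {ι : Type*} [Fintype ι] {p : ι → MvPolynomial (Fin 3) k}
    (hhom : ∀ i, (p i).IsHomogeneous 1)
    (hW : ∀ P ∈ W, ∃ i, MvPolynomial.eval P.rep (p i) = 0) :
    ∏ i, p i ∈ fatIdeal k W 1 := by
  simp only [fatIdeal, Submodule.mem_iInf, pow_one]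
  intro P hP
  obtain ⟨i, hi⟩ := hW P hP
  refine Ideal.mem_of_dvd _ (Finset.dvd_prod_of_mem p (Finset.mem_univ i)) fun c => ?_
  rw [eval_smul_of_isHomogeneous (hhom i), hi, mul_zero]

theorem pow_mem_fatIdeal {F : MvPolynomial (Fin 3) k} (hF : F ∈ fatIdeal k W 1) (m : ℕ) :
    F ^ m ∈ fatIdeal k W m := by
  simp only [fatIdeal, Submodule.mem_iInf, pow_one] at hF ⊢
  exact fun P hP => Ideal.pow_mem_pow (hF P hP) m

theorem mul_succ_le_two_mul_of_forall_succ_mul_sub_le {m d e : ℕ} (ht : 0 < t) {a : Fin t → ℕ}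
    (hd : d = ∑ i, a i + e) (h : ∀ i : Fin t, ((i : ℕ) + 1) * (m - a i) ≤ e) :
    m * (t + 1) ≤ 2 * d := by
  have hi : ∀ i : Fin t, ((i : ℕ) + 1) * m ≤ e + t * a i := fun i =>
    calc ((i : ℕ) + 1) * m ≤ (i + 1) * ((m - a i) + a i) := by gcongr; omega
      _ = (i + 1) * (m - a i) + (i + 1) * a i := mul_add _ _ _
      _ ≤ e + t * a i := by gcongr; exacts [h i, i.isLt]
  have hgauss : (∑ i : Fin t, ((i : ℕ) + 1)) * 2 = t * (t + 1) := by
    rw [Fin.sum_univ_eq_sum_range (· + 1), mul_comm t]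
    simpa [Finset.sum_range_succ'] using Finset.sum_range_id_mul_two (t + 1)
  refine Nat.le_of_mul_le_mul_left ?_ ht
  calc t * (m * (t + 1)) = t * (t + 1) * m := by ring
    _ = 2 * ∑ i : Fin t, ((i : ℕ) + 1) * m := by
        rw [← hgauss, ← Finset.sum_mul]
        ring
    _ ≤ 2 * ∑ i, (e + t * a i) := by gcongr with i; exact hi i
    _ = t * (2 * d) := by
        rw [Finset.sum_add_distrib, ← Finset.mul_sum, hd, Finset.sum_const, Finset.card_univ,
          Fintype.card_fin, smul_eq_mul]
        ring

theorem mul_succ_le_two_mul_of_forall_le_multiplicityAt [Infinite k] (ht : 0 < t)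
    (hhom : ∀ i, (φ i).IsHomogeneous 1) (hne : ∀ i, φ i ≠ 0)
    (hcard : ∀ i : Fin t, (i : ℕ) + 1 ≤ (T i).card)
    (honline : ∀ i, ∀ P ∈ T i, MvPolynomial.eval P.rep (φ i) = 0)
    (hone : ∀ i, ∀ P ∈ T i, ∀ j, j ≠ i → MvPolynomial.eval P.rep (φ j) ≠ 0)
    {F : MvPolynomial (Fin 3) k} {d m : ℕ} (hF : F.IsHomogeneous d) (hF0 : F ≠ 0)
    (hm : ∀ i, ∀ P ∈ T i, m ≤ multiplicityAt P.rep F) :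
    m * (t + 1) ≤ 2 * d := by
  have hunit : ∀ i, ¬IsUnit (φ i) := fun i hu =>
    (hu.map (MvPolynomial.eval 0)).ne_zero (by simpa using eval_smul_of_isHomogeneous (hhom i) 0 0)
  obtain ⟨a, G, rfl, hG⟩ := exists_eq_prod_pow_mul_and_not_dvd hunit hF0
  have hprod : (∏ i, φ i ^ a i).IsHomogeneous (∑ i, a i) :=
    MvPolynomial.IsHomogeneous.prod _ _ _ fun i _ => by simpa using (hhom i).pow (a i)
  obtain ⟨e, hd, hGe⟩ := isHomogeneous_of_mul_left hprod hF0 hF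
  refine mul_succ_le_two_mul_of_forall_succ_mul_sub_le ht hd fun i => ?_
  have hmult : ∀ P ∈ T i, ((m - a i : ℕ) : ℕ∞) ≤ multiplicityAt P.rep G := by
    intro P hP
    rw [ENat.natCast_sub, tsub_le_iff_left]
    calc (m : ℕ∞) ≤ multiplicityAt P.rep (∏ i, φ i ^ a i) + multiplicityAt P.rep G :=
          (hm i P hP).trans_eq (multiplicityAt_mul _ _ _)
      _ ≤ a i + multiplicityAt P.rep G := by
          gcongr
          exact multiplicityAt_prod_pow_le hhom hne (hone i P hP) a
  have hbezout : (T i).card * (m - a i) ≤ e := by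
    have := (Finset.card_nsmul_le_sum (T i) _ _ hmult).trans
      (sum_multiplicityAt_le_of_not_dvd (hhom i) (hne i) hGe (hG i) (T i) (honline i))
    rw [nsmul_eq_mul] at this
    exact_mod_cast this
  exact (Nat.mul_le_mul_right _ (hcard i)).trans hbezout

end LineCount

theorem stmt19_general {k : Type*} [Field k] [Infinite k] {t : ℕ} (ht : 0 < t)
    {W : Finset (ℙ k (Fin 3 → k))} {T : Fin t → Finset (ℙ k (Fin 3 → k))}
    {φ : Fin t → MvPolynomial (Fin 3) k}
    (hcard : ∀ i : Fin t, (i : ℕ) + 1 ≤ (T i).card)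
    (hhom : ∀ i, (φ i).IsHomogeneous 1) (hne : ∀ i, φ i ≠ 0)
    (hW : ∀ P, P ∈ W ↔ ∃ i, P ∈ T i)
    (honline : ∀ i, ∀ P ∈ T i, MvPolynomial.eval P.rep (φ i) = 0)
    (hone : ∀ P ∈ W, ∀ i j : Fin t, i ≠ j →
      ¬(MvPolynomial.eval P.rep (φ i) = 0 ∧ MvPolynomial.eval P.rep (φ j) = 0))
    (m : ℕ) :
    m * (alphaDeg k (fatIdeal k W 1) + 1) ≤ 2 * alphaDeg k (fatIdeal k W m) := by
  have hmem : ∏ i, φ i ∈ fatIdeal k W 1 := prod_mem_fatIdeal_one hhom fun P hP =>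
    ((hW P).mp hP).imp fun i => honline i P
  have hprod : (∏ i, φ i).IsHomogeneous t := by
    simpa using MvPolynomial.IsHomogeneous.prod Finset.univ φ (fun _ => 1) fun i _ => hhom i
  have hne_prod : ∏ i, φ i ≠ 0 := Finset.prod_ne_zero_iff.mpr fun i _ => hne i
  have hα : alphaDeg k (fatIdeal k W 1) ≤ t := Nat.sInf_le ⟨_, hmem, hne_prod, hprod⟩
  have hnonempty : {d | ∃ f ∈ fatIdeal k W m, f ≠ 0 ∧ f.IsHomogeneous d}.Nonempty :=
    ⟨_, _, pow_mem_fatIdeal hmem m, pow_ne_zero m hne_prod, hprod.pow m⟩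
  obtain ⟨F, hFmem, hF0, hF⟩ : ∃ F ∈ fatIdeal k W m, F ≠ 0 ∧
      F.IsHomogeneous (alphaDeg k (fatIdeal k W m)) :=
    Nat.sInf_mem hnonempty
  simp only [fatIdeal, Submodule.mem_iInf] at hFmem
  calc m * (alphaDeg k (fatIdeal k W 1) + 1) ≤ m * (t + 1) := by gcongr
    _ ≤ 2 * alphaDeg k (fatIdeal k W m) :=
      mul_succ_le_two_mul_of_forall_le_multiplicityAt ht hhom hne hcard honline
        (fun i P hP j hji hj => hone P ((hW P).mpr ⟨i, hP⟩) j i hji ⟨hj, honline i P hP⟩) hF hF0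
        fun i P hP => le_multiplicityAt_of_mem_pointIdeal_pow (hFmem P ((hW P).mpr ⟨i, hP⟩))

theorem stmt19 (k : Type*) [Field k] [IsAlgClosed k] [CharZero k]
    (t : ℕ) (ht : 0 < t)
    (c : Fin t → ℕ) (hc1 : ∀ i, 1 ≤ c i) (hcmono : Monotone c)
    (hci : ∀ i : Fin t, (i : ℕ) + 1 ≤ c i)
    (W : Finset (ℙ k (Fin 3 → k)))
    (T : Fin t → Finset (ℙ k (Fin 3 → k)))
    (φ : Fin t → MvPolynomial (Fin 3) k)
    (hhom : ∀ i, (φ i).IsHomogeneous 1)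
    (hne : ∀ i, φ i ≠ 0)
    (hprop : ∀ i j, i ≠ j → ∀ a : k, φ i ≠ a • φ j)
    (hW : ∀ P, P ∈ W ↔ ∃ i, P ∈ T i)
    (hcard : ∀ i : Fin t, (T i).card = c i)
    (honline : ∀ i, ∀ P ∈ T i, MvPolynomial.eval (Projectivization.rep P) (φ i) = 0)
    (hone : ∀ P ∈ W, ∀ i j : Fin t, i ≠ j →
      ¬(MvPolynomial.eval (Projectivization.rep P) (φ i) = 0 ∧
        MvPolynomial.eval (Projectivization.rep P) (φ j) = 0))
    (r : ℕ) (hr : 1 ≤ r) :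
    r * alphaDeg k (fatIdeal k W 1) + r ≤ alphaDeg k (fatIdeal k W (2 * r)) := by
  have h := stmt19_general ht (fun i => (hci i).trans_eq (hcard i).symm) hhom hne hW honline hone
    (2 * r)
  linarith
end
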